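/- arXiv:2208.04472 — 2 statements merged into one kernel-verified Lean document; each statement's English description precedes it below -/
import Mathlib

section
/- Let 0 < λ and let η ∈ (−λ, λ). Then the principal-value integral lim_{ε→0⁺} [ ∫_{−λ}^{η−ε} 6μ(2μ² − λ²)/((μ − η)·√(λ² − μ²)) dμ + ∫_{η+ε}^{λ} 6μ(2μ² − λ²)/((μ − η)·√(λ² − μ²)) dμ ] exists and equals 12πη². Equivalently, the finite Hilbert transform of the odd extension of the genus-0 condensate spectral flux density v(μ) = 6μ(2μ² − λ²)/(π·√(λ² − μ²)) equals 12η²/π on (−λ, λ). -/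
/-!
Dividing by `μ - η`,
`6μ(2μ² - λ²) = (μ - η)(12μ² + 12ημ + 12η² - 6λ²) + 6η(2η² - λ²)`.
The quotient contributes an ordinary integral against `1 / √(λ² - μ²)`, equal to `12πη²`. The
remainder contributes nothing, because the principal value of `1 / ((μ - η) √(λ² - μ²))` vanishes:
with `s = √(λ² - η²)` this kernel has the primitive
`(log |μ - η| - log (λ² - ημ + s √(λ² - μ²))) / s`, whose singular part is even about `η` and
whose value at both endpoints is `-log λ / s`.
-/

open Set Filter Topology MeasureTheory

theorem tendsto_sub_sub_add_of_continuousAt {G : Type*} [AddGroup G] [TopologicalSpace G]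
    [ContinuousSub G] {F : ℝ → G} {c : ℝ} (hF : ContinuousAt F c) :
    Tendsto (fun ε ↦ F (c - ε) - F (c + ε)) (𝓝[>] 0) (𝓝 0) := by
  have hsub : Tendsto (fun ε : ℝ ↦ c - ε) (𝓝 0) (𝓝 c) :=
    Continuous.tendsto' (by fun_prop) _ _ (sub_zero c)
  have hadd : Tendsto (fun ε : ℝ ↦ c + ε) (𝓝 0) (𝓝 c) :=
    Continuous.tendsto' (by fun_prop) _ _ (add_zero c)
  simpa only [sub_self, Function.comp_apply] using
    ((hF.tendsto.comp hsub).sub (hF.tendsto.comp hadd)).mono_left nhdsWithin_le_nhds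

section PrincipalValue

variable {E : Type*} [NormedAddCommGroup E] [NormedSpace ℝ E]

/-- `HasPrincipalValue f a c b L`: the integral of `f` over `[a, b]` exists as a Cauchy principal
value at the interior point `c` and equals `L`. Integrability off symmetric neighbourhoods of `c`
is part of the notion, so that the truncated integrals are not junk values for small `ε`. -/
structure HasPrincipalValue (f : ℝ → E) (a c b : ℝ) (L : E) : Prop where
  intervalIntegrable_left : ∀ᶠ ε in 𝓝[>] 0, IntervalIntegrable f volume a (c - ε)
  intervalIntegrable_right : ∀ᶠ ε in 𝓝[>] 0, IntervalIntegrable f volume (c + ε) b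
  tendsto : Tendsto (fun ε ↦ (∫ x in a..(c - ε), f x) + ∫ x in (c + ε)..b, f x) (𝓝[>] 0) (𝓝 L)

variable {f g F : ℝ → E} {a b c : ℝ} {L M : E}

namespace HasPrincipalValue

theorem congr_ae (hf : HasPrincipalValue f a c b L) (hfg : f =ᵐ[volume] g) :
    HasPrincipalValue g a c b L where
  intervalIntegrable_left :=
    hf.intervalIntegrable_left.mono fun _ h ↦ h.congr_ae (ae_restrict_of_ae hfg)
  intervalIntegrable_right :=
    hf.intervalIntegrable_right.mono fun _ h ↦ h.congr_ae (ae_restrict_of_ae hfg)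
  tendsto := hf.tendsto.congr fun _ ↦ congrArg₂ (· + ·)
    (intervalIntegral.integral_congr_ae_restrict (ae_restrict_of_ae hfg))
    (intervalIntegral.integral_congr_ae_restrict (ae_restrict_of_ae hfg))

theorem add (hf : HasPrincipalValue f a c b L) (hg : HasPrincipalValue g a c b M) :
    HasPrincipalValue (fun x ↦ f x + g x) a c b (L + M) where
  intervalIntegrable_left := by
    filter_upwards [hf.intervalIntegrable_left, hg.intervalIntegrable_left] with ε hfε hgε
      using hfε.add hgε
  intervalIntegrable_right := by
    filter_upwards [hf.intervalIntegrable_right, hg.intervalIntegrable_right] with ε hfε hgε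
      using hfε.add hgε
  tendsto := by
    refine (hf.tendsto.add hg.tendsto).congr' ?_
    filter_upwards [hf.intervalIntegrable_left, hg.intervalIntegrable_left,
      hf.intervalIntegrable_right, hg.intervalIntegrable_right] with ε hfl hgl hfr hgr
    rw [intervalIntegral.integral_add hfl hgl, intervalIntegral.integral_add hfr hgr,
      add_add_add_comm]

theorem const_smul (hf : HasPrincipalValue f a c b L) (k : ℝ) :
    HasPrincipalValue (fun x ↦ k • f x) a c b (k • L) where
  intervalIntegrable_left := hf.intervalIntegrable_left.mono fun _ h ↦ h.smul k
  intervalIntegrable_right := hf.intervalIntegrable_right.mono fun _ h ↦ h.smul k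
  tendsto := (hf.tendsto.const_smul k).congr fun _ ↦ by
    rw [intervalIntegral.integral_smul, intervalIntegral.integral_smul, smul_add]

theorem of_integral_eq_sub (hc : c ∈ Ioo a b)
    (hint : ∀ u v, u ≤ v → Icc u v ⊆ Icc a b \ {c} → IntervalIntegrable f volume u v)
    (hF : ∀ u v, u ≤ v → Icc u v ⊆ Icc a b \ {c} → ∫ x in u..v, f x = F v - F u)
    (hlim : Tendsto (fun ε ↦ F (c - ε) - F (c + ε)) (𝓝[>] 0) (𝓝 0)) :
    HasPrincipalValue f a c b (F b - F a) := by
  have hleft : ∀ᶠ ε in 𝓝[>] (0 : ℝ), a ≤ c - ε ∧ Icc a (c - ε) ⊆ Icc a b \ {c} := by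
    filter_upwards [Ioo_mem_nhdsGT (sub_pos.2 hc.1)] with ε ⟨hε, hεa⟩
    exact ⟨by linarith, fun x hx ↦ ⟨⟨hx.1, by linarith [hx.2, hc.2]⟩,
      ne_of_lt (by linarith [hx.2])⟩⟩
  have hright : ∀ᶠ ε in 𝓝[>] (0 : ℝ), c + ε ≤ b ∧ Icc (c + ε) b ⊆ Icc a b \ {c} := by
    filter_upwards [Ioo_mem_nhdsGT (sub_pos.2 hc.2)] with ε ⟨hε, hεb⟩
    exact ⟨by linarith, fun x hx ↦ ⟨⟨by linarith [hx.1, hc.1], hx.2⟩,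
      ne_of_gt (by linarith [hx.1])⟩⟩
  refine ⟨hleft.mono fun ε h ↦ hint _ _ h.1 h.2, hright.mono fun ε h ↦ hint _ _ h.1 h.2, ?_⟩
  have hsum : Tendsto (fun ε ↦ F b - F a + (F (c - ε) - F (c + ε))) (𝓝[>] 0) (𝓝 (F b - F a)) := by
    simpa only [add_zero] using hlim.const_add (F b - F a)
  refine hsum.congr' ?_
  filter_upwards [hleft, hright] with ε hl hr
  rw [hF _ _ hl.1 hl.2, hF _ _ hr.1 hr.2]
  abel

theorem of_hasDerivAt [CompleteSpace E] (hc : c ∈ Ioo a b)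
    (hcont : ContinuousOn F (Icc a b \ {c}))
    (hderiv : ∀ x ∈ Ioo a b, x ≠ c → HasDerivAt F (f x) x)
    (hint : ∀ u v, u ≤ v → Icc u v ⊆ Icc a b \ {c} → IntervalIntegrable f volume u v)
    (hlim : Tendsto (fun ε ↦ F (c - ε) - F (c + ε)) (𝓝[>] 0) (𝓝 0)) :
    HasPrincipalValue f a c b (F b - F a) := by
  refine of_integral_eq_sub hc hint (fun u v huv hsub ↦ ?_) hlim
  have hIcc : Icc u v ⊆ Icc a b := hsub.trans sdiff_subset
  refine intervalIntegral.integral_eq_sub_of_hasDerivAt_of_le huv (hcont.mono hsub)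
    (fun x hx ↦ hderiv x ?_ (hsub (Ioo_subset_Icc_self hx)).2) (hint u v huv hsub)
  exact ⟨(hIcc (left_mem_Icc.2 huv)).1.trans_lt hx.1, hx.2.trans_le (hIcc (right_mem_Icc.2 huv)).2⟩

theorem of_intervalIntegrable (hc : c ∈ Ioo a b)
    (hf : IntervalIntegrable f volume a b) : HasPrincipalValue f a c b (∫ x in a..b, f x) := by
  have hab : a ≤ b := (hc.1.trans hc.2).le
  have hint : ∀ u v, u ∈ Icc a b → v ∈ Icc a b → IntervalIntegrable f volume u v :=
    fun u v hu hv ↦ hf.mono_set (uIcc_of_le hab ▸ uIcc_subset_Icc hu hv)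
  have hends : ∀ u v, u ≤ v → Icc u v ⊆ Icc a b \ {c} → u ∈ Icc a b ∧ v ∈ Icc a b :=
    fun u v huv hsub ↦ ⟨(hsub (left_mem_Icc.2 huv)).1, (hsub (right_mem_Icc.2 huv)).1⟩
  have ha : a ∈ Icc a b := left_mem_Icc.2 hab
  have hcont : ContinuousAt (fun t ↦ ∫ x in a..t, f x) c := by
    have hon := intervalIntegral.continuousOn_primitive_interval' hf left_mem_uIcc
    rw [uIcc_of_le hab] at hon
    exact hon.continuousAt (Icc_mem_nhds hc.1 hc.2)
  have hpv := of_integral_eq_sub (F := fun t ↦ ∫ x in a..t, f x) hc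
    (fun u v huv hsub ↦ hint u v (hends u v huv hsub).1 (hends u v huv hsub).2)
    (fun u v huv hsub ↦ (intervalIntegral.integral_interval_sub_left
      (hint a v ha (hends u v huv hsub).2) (hint a u ha (hends u v huv hsub).1)).symm)
    (tendsto_sub_sub_add_of_continuousAt hcont)
  simpa only [intervalIntegral.integral_same, sub_zero] using hpv

theorem of_eq_sub_mul_add {w p q : ℝ → ℝ} {k L : ℝ} (hc : c ∈ Ioo a b)
    (hw : HasPrincipalValue (fun x ↦ w x / (x - c)) a c b L)
    (hq : IntervalIntegrable (fun x ↦ q x * w x) volume a b)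
    (hp : ∀ x, p x = (x - c) * q x + k) :
    HasPrincipalValue (fun x ↦ p x * w x / (x - c)) a c b ((∫ x in a..b, q x * w x) + k * L) := by
  refine ((of_intervalIntegrable hc hq).add (hw.const_smul k)).congr_ae ?_
  filter_upwards [volume.ae_ne c] with x hx
  have hxc : x - c ≠ 0 := sub_ne_zero.2 hx
  rw [hp, smul_eq_mul]
  field_simp

end HasPrincipalValue

theorem intervalIntegrable_div_sub {w : ℝ → ℝ} (hw : IntervalIntegrable w volume a b)
    (hc : c ∉ uIcc a b) : IntervalIntegrable (fun x ↦ w x / (x - c)) volume a b :=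
  hw.mul_continuousOn <| ContinuousOn.inv₀ (by fun_prop) fun _ hx ↦
    sub_ne_zero.2 (ne_of_mem_of_not_mem hx hc)

end PrincipalValue

section ArcsineWeight

variable {r c x : ℝ}

theorem pos_of_mem_Ioo_neg_self (hx : x ∈ Ioo (-r) r) : 0 < r := by
  linarith [hx.1, hx.2]

theorem sq_sub_sq_pos (hx : x ∈ Ioo (-r) r) : 0 < r ^ 2 - x ^ 2 :=
  sub_pos.2 (sq_lt_sq' hx.1 hx.2)

theorem hasDerivAt_sqrt_sq_sub_sq (hx : x ∈ Ioo (-r) r) :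
    HasDerivAt (fun y ↦ √(r ^ 2 - y ^ 2)) (-x / √(r ^ 2 - x ^ 2)) x := by
  refine ((((hasDerivAt_id' x).fun_pow 2).const_sub (r ^ 2)).sqrt
    (sq_sub_sq_pos hx).ne').congr_deriv ?_
  ring

theorem hasDerivAt_arcsin_div (hx : x ∈ Ioo (-r) r) :
    HasDerivAt (fun y ↦ Real.arcsin (y / r)) (√(r ^ 2 - x ^ 2))⁻¹ x := by
  have hr : 0 < r := pos_of_mem_Ioo_neg_self hx
  have hlower : x / r ≠ -1 := by rw [Ne, div_eq_iff hr.ne']; linarith [hx.1]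
  have hupper : x / r ≠ 1 := by rw [Ne, div_eq_iff hr.ne']; linarith [hx.2]
  have hsqrt : √(r ^ 2 - x ^ 2) = r * √(1 - (x / r) ^ 2) := by
    rw [show r ^ 2 - x ^ 2 = r ^ 2 * (1 - (x / r) ^ 2) by field_simp,
      Real.sqrt_mul (sq_nonneg r), Real.sqrt_sq hr.le]
  refine ((Real.hasDerivAt_arcsin hlower hupper).comp x
    ((hasDerivAt_id' x).div_const r)).congr_deriv ?_
  rw [hsqrt]
  ring

theorem intervalIntegrable_inv_sqrt_sq_sub_sq (hr : 0 ≤ r) :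
    IntervalIntegrable (fun x ↦ (√(r ^ 2 - x ^ 2))⁻¹) volume (-r) r := by
  have hle : -r ≤ r := neg_le_self hr
  refine intervalIntegral.intervalIntegrable_deriv_of_nonneg
    (g := fun x ↦ Real.arcsin (x / r)) (by fun_prop) (fun x hx ↦ ?_) (fun x _ ↦ by positivity)
  rw [min_eq_left hle, max_eq_right hle] at hx
  exact hasDerivAt_arcsin_div hx

theorem integral_quadratic_mul_inv_sqrt (hr : 0 < r) (α β γ : ℝ) :
    ∫ x in (-r)..r, (α * x ^ 2 + β * x + γ) * (√(r ^ 2 - x ^ 2))⁻¹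
      = Real.pi * (α * r ^ 2 / 2 + γ) := by
  have hderiv : ∀ x ∈ Ioo (-r) r, HasDerivAt
      (fun y ↦ (α * r ^ 2 / 2 + γ) * Real.arcsin (y / r) - (α / 2 * y + β) * √(r ^ 2 - y ^ 2))
      ((α * x ^ 2 + β * x + γ) * (√(r ^ 2 - x ^ 2))⁻¹) x := by
    intro x hx
    refine (((hasDerivAt_arcsin_div hx).const_mul _).sub
      ((((hasDerivAt_id' x).const_mul (α / 2)).add_const β).mul
        (hasDerivAt_sqrt_sq_sub_sq hx))).congr_deriv ?_
    have hpos := Real.sqrt_pos.2 (sq_sub_sq_pos hx)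
    have hsq := Real.sq_sqrt (sq_sub_sq_pos hx).le
    field_simp
    linear_combination (-α) * hsq
  rw [intervalIntegral.integral_eq_sub_of_hasDerivAt_of_le (neg_le_self hr.le) (by fun_prop) hderiv
    ((intervalIntegrable_inv_sqrt_sq_sub_sq hr.le).continuousOn_mul (by fun_prop))]
  simp only [neg_div, div_self hr.ne', Real.arcsin_neg, Real.arcsin_one, neg_sq, sub_self,
    Real.sqrt_zero, mul_zero, sub_zero]
  ring

theorem sq_sub_mul_add_sqrt_mul_sqrt_pos (hc : c ∈ Ioo (-r) r) (hx : x ∈ Icc (-r) r) :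
    0 < r ^ 2 - c * x + √(r ^ 2 - c ^ 2) * √(r ^ 2 - x ^ 2) := by
  have hlt : c * x < r ^ 2 := by
    nlinarith [sq_sub_sq_pos hc, sq_le_sq' hx.1 hx.2, sq_nonneg (c - x)]
  linarith [mul_nonneg (Real.sqrt_nonneg (r ^ 2 - c ^ 2)) (Real.sqrt_nonneg (r ^ 2 - x ^ 2))]

theorem continuousOn_log_sq_sub_mul_add_sqrt_mul_sqrt (hc : c ∈ Ioo (-r) r) :
    ContinuousOn (fun x ↦ Real.log (r ^ 2 - c * x + √(r ^ 2 - c ^ 2) * √(r ^ 2 - x ^ 2)))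
      (Icc (-r) r) :=
  ContinuousOn.log (by fun_prop) fun _ hx ↦ (sq_sub_mul_add_sqrt_mul_sqrt_pos hc hx).ne'

/-- A primitive of the arcsine-weighted Cauchy kernel `1 / ((x - c) √(r² - x²))` on
`(-r, r) \ {c}`. Since `Real.log (x - c)` is `log |x - c|`, one formula serves both sides of `c`. -/
noncomputable def arcsineCauchyPrimitive (r c x : ℝ) : ℝ :=
  (Real.log (x - c) - Real.log (r ^ 2 - c * x + √(r ^ 2 - c ^ 2) * √(r ^ 2 - x ^ 2))) /
    √(r ^ 2 - c ^ 2)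

theorem continuousOn_arcsineCauchyPrimitive (hc : c ∈ Ioo (-r) r) :
    ContinuousOn (arcsineCauchyPrimitive r c) (Icc (-r) r \ {c}) :=
  ((ContinuousOn.log (by fun_prop) fun _ hx ↦ sub_ne_zero.2 hx.2).sub
    ((continuousOn_log_sq_sub_mul_add_sqrt_mul_sqrt hc).mono sdiff_subset)).div_const _

theorem hasDerivAt_log_sq_sub_mul_add_sqrt_mul_sqrt (hc : c ∈ Ioo (-r) r) (hx : x ∈ Ioo (-r) r)
    (hxc : x ≠ c) :
    HasDerivAt (fun y ↦ Real.log (r ^ 2 - c * y + √(r ^ 2 - c ^ 2) * √(r ^ 2 - y ^ 2)))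
      (1 / (x - c) - √(r ^ 2 - c ^ 2) * ((√(r ^ 2 - x ^ 2))⁻¹ / (x - c))) x := by
  have hlogArg := sq_sub_mul_add_sqrt_mul_sqrt_pos hc (Ioo_subset_Icc_self hx)
  refine (((((hasDerivAt_id' x).const_mul c).const_sub (r ^ 2)).add
    ((hasDerivAt_sqrt_sq_sub_sq hx).const_mul √(r ^ 2 - c ^ 2))).log hlogArg.ne').congr_deriv ?_
  have hxpos := Real.sqrt_pos.2 (sq_sub_sq_pos hx)
  have hxsq := Real.sq_sqrt (sq_sub_sq_pos hx).le
  have hcsq := Real.sq_sqrt (sq_sub_sq_pos hc).le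
  have hsub : x - c ≠ 0 := sub_ne_zero.2 hxc
  rw [Pi.add_apply, div_eq_iff hlogArg.ne']
  field_simp
  linear_combination √(r ^ 2 - x ^ 2) * hcsq - √(r ^ 2 - c ^ 2) * hxsq

theorem hasDerivAt_arcsineCauchyPrimitive (hc : c ∈ Ioo (-r) r) (hx : x ∈ Ioo (-r) r)
    (hxc : x ≠ c) :
    HasDerivAt (arcsineCauchyPrimitive r c) ((√(r ^ 2 - x ^ 2))⁻¹ / (x - c)) x := by
  refine (((((hasDerivAt_id' x).sub_const c).log (sub_ne_zero.2 hxc)).sub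
    (hasDerivAt_log_sq_sub_mul_add_sqrt_mul_sqrt hc hx hxc)).div_const
      √(r ^ 2 - c ^ 2)).congr_deriv ?_
  rw [sub_sub_cancel, mul_div_cancel_left₀ _ (Real.sqrt_pos.2 (sq_sub_sq_pos hc)).ne']

theorem tendsto_arcsineCauchyPrimitive_sub (hc : c ∈ Ioo (-r) r) :
    Tendsto (fun ε ↦ arcsineCauchyPrimitive r c (c - ε) - arcsineCauchyPrimitive r c (c + ε))
      (𝓝[>] 0) (𝓝 0) := by
  have hlim := (tendsto_sub_sub_add_of_continuousAt <|
    (continuousOn_log_sq_sub_mul_add_sqrt_mul_sqrt hc).continuousAt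
      (Icc_mem_nhds hc.1 hc.2)).neg.div_const √(r ^ 2 - c ^ 2)
  rw [neg_zero, zero_div] at hlim
  refine hlim.congr fun ε ↦ ?_
  rw [arcsineCauchyPrimitive, arcsineCauchyPrimitive, sub_sub_cancel_left, add_sub_cancel_left,
    Real.log_neg_eq_log]
  ring

theorem arcsineCauchyPrimitive_right (hc : c ∈ Ioo (-r) r) :
    arcsineCauchyPrimitive r c r = -Real.log r / √(r ^ 2 - c ^ 2) := by
  have hr : 0 < r := pos_of_mem_Ioo_neg_self hc
  have hlog : Real.log (r ^ 2 - c * r) = Real.log r + Real.log (r - c) := by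
    rw [← Real.log_mul hr.ne' (sub_pos.2 hc.2).ne']
    ring_nf
  rw [arcsineCauchyPrimitive, sub_self (r ^ 2), Real.sqrt_zero, mul_zero, add_zero, hlog]
  ring

theorem arcsineCauchyPrimitive_neg_neg (r c x : ℝ) :
    arcsineCauchyPrimitive r (-c) (-x) = arcsineCauchyPrimitive r c x := by
  rw [arcsineCauchyPrimitive, arcsineCauchyPrimitive, neg_sub_neg, ← neg_sub x c,
    Real.log_neg_eq_log, neg_mul_neg, neg_sq, neg_sq]

theorem arcsineCauchyPrimitive_left (hc : c ∈ Ioo (-r) r) :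
    arcsineCauchyPrimitive r c (-r) = -Real.log r / √(r ^ 2 - c ^ 2) := by
  have hneg : -c ∈ Ioo (-r) r := ⟨neg_lt_neg hc.2, neg_lt.1 hc.1⟩
  rw [← arcsineCauchyPrimitive_neg_neg, neg_neg, arcsineCauchyPrimitive_right hneg, neg_sq]

theorem hasPrincipalValue_inv_sqrt_div_sub (hc : c ∈ Ioo (-r) r) :
    HasPrincipalValue (fun x ↦ (√(r ^ 2 - x ^ 2))⁻¹ / (x - c)) (-r) c r 0 := by
  have hr : 0 < r := pos_of_mem_Ioo_neg_self hc
  have hpv := HasPrincipalValue.of_hasDerivAt hc (continuousOn_arcsineCauchyPrimitive hc)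
    (fun x hx hxc ↦ hasDerivAt_arcsineCauchyPrimitive hc hx hxc)
    (fun u v huv hsub ↦ ?_) (tendsto_arcsineCauchyPrimitive_sub hc)
  · rwa [arcsineCauchyPrimitive_right hc, arcsineCauchyPrimitive_left hc, sub_self] at hpv
  · rw [← uIcc_of_le huv] at hsub
    refine intervalIntegrable_div_sub
      ((intervalIntegrable_inv_sqrt_sq_sub_sq hr.le).mono_set ?_) fun hmem ↦ (hsub hmem).2 rfl
    rw [uIcc_of_le (neg_le_self hr.le)]
    exact hsub.trans sdiff_subset

end ArcsineWeight

/-- Finite Hilbert transform of the odd extension of the genus-0 condensate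
spectral flux density: the principal-value integral of
`6μ(2μ²-λ²)/((μ-η)√(λ²-μ²))` over `(-λ, λ)` equals `12πη²`. -/
theorem genus0_condensate_FHT_v (lam η : ℝ) (hlam : 0 < lam)
    (hη : η ∈ Set.Ioo (-lam) lam) :
    Filter.Tendsto
      (fun ε : ℝ =>
        (∫ μ in (-lam)..(η - ε),
          6 * μ * (2 * μ ^ 2 - lam ^ 2) / ((μ - η) * Real.sqrt (lam ^ 2 - μ ^ 2))) +
        ∫ μ in (η + ε)..lam,
          6 * μ * (2 * μ ^ 2 - lam ^ 2) / ((μ - η) * Real.sqrt (lam ^ 2 - μ ^ 2)))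
      (nhdsWithin 0 (Set.Ioi 0)) (nhds (12 * Real.pi * η ^ 2)) := by
  have hquot : IntervalIntegrable
      (fun μ ↦ (12 * μ ^ 2 + 12 * η * μ + (12 * η ^ 2 - 6 * lam ^ 2)) * (√(lam ^ 2 - μ ^ 2))⁻¹)
      volume (-lam) lam :=
    (intervalIntegrable_inv_sqrt_sq_sub_sq hlam.le).continuousOn_mul (by fun_prop)
  have hpv := (hasPrincipalValue_inv_sqrt_div_sub hη).of_eq_sub_mul_add hη hquot
    (p := fun μ ↦ 6 * μ * (2 * μ ^ 2 - lam ^ 2)) (k := 6 * η * (2 * η ^ 2 - lam ^ 2))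
    (fun μ ↦ by ring)
  have hintegrand (μ : ℝ) : 6 * μ * (2 * μ ^ 2 - lam ^ 2) / ((μ - η) * √(lam ^ 2 - μ ^ 2))
      = 6 * μ * (2 * μ ^ 2 - lam ^ 2) * (√(lam ^ 2 - μ ^ 2))⁻¹ / (μ - η) := by
    rw [← div_eq_mul_inv, div_div, mul_comm (μ - η)]
  simp only [hintegrand]
  convert hpv.tendsto using 2
  rw [integral_quadratic_mul_inv_sqrt hlam]
  ring
end

section
/- Let 0 < λ and let η ∈ (0, λ). Then the tracer velocity s(ζ) = 6(2ζ² − λ²) and the density of states u(μ) = μ/(π·√(λ² − μ²)) of the genus-0 soliton condensate satisfy the equation of state of the KdV soliton gas: 6(2η² − λ²) = 4η² + (1/η)·∫₀^λ ln((η + μ)/|η − μ|) · (μ/(π·√(λ² − μ²))) · (6(2η² − λ²) − 6(2μ² − λ²)) dμ. -/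
/-!
The logarithmic kernel is diagonal in Chebyshev polynomials. Integrating by parts,
`∫₀^π log |sin x| cos (2nx) dx = -π / (2n)` for `n ≥ 1`; since
`cos φ - cos θ = 2 sin ((θ + φ) / 2) sin ((θ - φ) / 2)`, this turns into
`∫₀^π log |cos φ - cos θ| cos (nθ) dθ = -(π / n) cos (nφ)`. For odd `n`, folding `[0, π]` at `π / 2`
and substituting `μ = λ cos θ` gives
`∫₀^λ log ((η + μ) / |η - μ|) Tₙ(μ / λ) / √(λ² - μ²) dμ = (π / n) Tₙ(η / λ)`.

Since `u = (λ / π) T₁ / √(λ² - μ²)` and `u s = (3 λ³ / π) (T₁ + T₃) / √(λ² - μ²)`, the condensate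
satisfies the two dispersion relations `∫ G u = η` and `∫ G u s = 4 η³`, where `G` is the
logarithmic kernel; the equation of state is `s(η)` times the first minus the second.
-/

open Real Set intervalIntegral Polynomial.Chebyshev
open MeasureTheory (volume)

section LogSinFourier

lemma integral_cos_two_mul_nat_mul {n : ℕ} (hn : n ≠ 0) :
    ∫ x in 0..π, cos (2 * n * x) = 0 := by
  have hn' : (2 * n : ℝ) ≠ 0 := by positivity
  rw [integral_comp_mul_left (fun x ↦ cos x) hn', integral_cos, mul_zero, sin_zero, sub_zero,
    show (2 * n : ℝ) * π = (2 * n : ℕ) * π by push_cast; rfl, sin_nat_mul_pi, smul_zero]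

lemma intervalIntegrable_log_mul {f g : ℝ → ℝ} {a b : ℝ} (hf : MeromorphicOn f (uIcc a b))
    (hg : ContinuousOn g (uIcc a b)) :
    IntervalIntegrable (fun x ↦ log (f x) * g x) volume a b :=
  hf.intervalIntegrable_log.mul_continuousOn hg

lemma hasDerivAt_sin_mul_log_sin_mul_cos (n : ℕ) {x : ℝ} (hx : sin x ≠ 0) :
    HasDerivAt (fun x ↦ sin x * log (sin x) * cos ((2 * n + 1) * x))
      ((n + 1) * (log (sin x) * cos (2 * (n + 1) * x)) - n * (log (sin x) * cos (2 * n * x)) +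
        (cos (2 * (n + 1) * x) + cos (2 * n * x)) / 2) x := by
  have hcos : HasDerivAt (fun x ↦ cos ((2 * n + 1) * x))
      (-sin ((2 * n + 1) * x) * (2 * n + 1)) x := by
    simpa using ((hasDerivAt_id x).const_mul (2 * n + 1 : ℝ)).cos
  have hmain := ((hasDerivAt_sin x).mul ((hasDerivAt_sin x).log hx)).mul hcos
  refine hmain.congr_deriv ?_
  rw [show 2 * (n + 1) * x = (2 * n + 1) * x + x by ring,
    show 2 * n * x = (2 * n + 1) * x - x by ring, cos_add, cos_sub]
  simp only [Pi.mul_apply]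
  field_simp
  ring

/- The factor `sin x` in the primitive `sin x log (sin x) cos ((2n + 1) x)` makes it continuous at
both endpoints, where it vanishes. -/
lemma integral_log_sin_mul_cos_recurrence (n : ℕ) :
    (n + 1) * (∫ x in 0..π, log (sin x) * cos (2 * (n + 1) * x)) -
        n * (∫ x in 0..π, log (sin x) * cos (2 * n * x)) =
      -((∫ x in 0..π, cos (2 * (n + 1) * x)) + ∫ x in 0..π, cos (2 * n * x)) / 2 := by
  have hlog (c : ℝ) : IntervalIntegrable (fun x ↦ log (sin x) * cos (c * x)) volume 0 π :=
    intervalIntegrable_log_mul (fun _ _ ↦ by fun_prop) (by fun_prop)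
  have hcos (c : ℝ) : IntervalIntegrable (fun x ↦ cos (c * x)) volume 0 π :=
    Continuous.intervalIntegrable (by fun_prop) 0 π
  have hdiff := ((hlog (2 * (n + 1))).const_mul (n + 1)).sub ((hlog (2 * n)).const_mul n)
  have hsum := ((hcos (2 * (n + 1))).add (hcos (2 * n))).div_const 2
  have hcont : Continuous fun x ↦ sin x * log (sin x) * cos ((2 * n + 1) * x) :=
    (continuous_mul_log.comp continuous_sin).mul (by fun_prop)
  have hFTC := integral_eq_sub_of_hasDerivAt_of_le pi_nonneg hcont.continuousOn
    (fun x hx ↦ hasDerivAt_sin_mul_log_sin_mul_cos n (sin_pos_of_mem_Ioo hx).ne')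
    (hdiff.add hsum)
  rw [integral_add hdiff hsum,
    integral_sub ((hlog _).const_mul _) ((hlog _).const_mul _), integral_div,
    integral_add (hcos _) (hcos _), integral_const_mul, integral_const_mul] at hFTC
  simp only [sin_pi, sin_zero, zero_mul, sub_zero] at hFTC
  linarith

theorem integral_log_sin_mul_cos_two_mul_nat_mul {n : ℕ} (hn : n ≠ 0) :
    ∫ x in 0..π, log (sin x) * cos (2 * n * x) = -(π / (2 * n)) := by
  suffices h : n * (∫ x in 0..π, log (sin x) * cos (2 * n * x)) = -(π / 2) by
    field_simp at h ⊢
    linarith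
  induction n, Nat.one_le_iff_ne_zero.mpr hn using Nat.le_induction with
  | base =>
    have hrec := integral_log_sin_mul_cos_recurrence 0
    have hint := integral_cos_two_mul_nat_mul one_ne_zero
    simp only [Nat.cast_zero, Nat.cast_one, zero_add, mul_zero, zero_mul, sub_zero, cos_zero,
      integral_const, smul_eq_mul, mul_one] at hrec hint ⊢
    rw [hrec, hint]
    ring
  | succ m hm ih =>
    have hm' : m ≠ 0 := Nat.one_le_iff_ne_zero.mp hm
    have hrec := integral_log_sin_mul_cos_recurrence m
    have hint := integral_cos_two_mul_nat_mul m.succ_ne_zero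
    rw [Nat.cast_succ] at hint
    rw [integral_cos_two_mul_nat_mul hm', hint, ih hm'] at hrec
    rw [Nat.cast_succ]
    linarith

lemma integral_log_sin_mul_sin_two_mul_nat_mul (n : ℕ) :
    ∫ x in 0..π, log (sin x) * sin (2 * n * x) = 0 := by
  have hreflect := integral_comp_sub_left (a := 0) (b := π)
    (fun x ↦ log (sin x) * sin (2 * n * x)) π
  have hsin (x : ℝ) : sin (2 * n * (π - x)) = -sin (2 * n * x) := by
    rw [show 2 * n * (π - x) = n * (2 * π) - 2 * n * x by ring, sin_nat_mul_two_pi_sub]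
  simp only [sin_pi_sub, hsin, mul_neg, integral_neg, sub_self,
    sub_zero] at hreflect
  linarith

theorem integral_log_sin_sub_mul_cos_two_mul_nat_mul {n : ℕ} (hn : n ≠ 0) (a : ℝ) :
    ∫ x in 0..π, log (sin (x - a)) * cos (2 * n * x) = -(π / (2 * n)) * cos (2 * n * a) := by
  have hperiodic : Function.Periodic (fun x ↦ log (sin x) * cos (2 * n * (x + a))) π := by
    intro x
    simp only [sin_add_pi, log_neg_eq_log]
    rw [show 2 * n * (x + π + a) = 2 * n * (x + a) + n * (2 * π) by ring, cos_add_nat_mul_two_pi]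
  calc ∫ x in 0..π, log (sin (x - a)) * cos (2 * n * x)
    _ = ∫ x in 0 - a..π - a, log (sin x) * cos (2 * n * (x + a)) := by
      rw [← integral_comp_sub_right (fun x ↦ log (sin x) * cos (2 * n * (x + a)))]
      simp only [sub_add_cancel]
    _ = ∫ x in 0..π, log (sin x) * cos (2 * n * (x + a)) := by
      simpa only [zero_add, zero_sub, ← sub_eq_neg_add] using
        hperiodic.intervalIntegral_add_eq (-a) 0
    _ = ∫ x in 0..π, (log (sin x) * cos (2 * n * x) * cos (2 * n * a) -
          log (sin x) * sin (2 * n * x) * sin (2 * n * a)) := by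
      simp only [mul_add, cos_add, mul_sub, mul_assoc]
    _ = -(π / (2 * n)) * cos (2 * n * a) := by
      rw [integral_sub
          ((intervalIntegrable_log_mul (fun _ _ ↦ by fun_prop) (by fun_prop)).mul_const _)
          ((intervalIntegrable_log_mul (fun _ _ ↦ by fun_prop) (by fun_prop)).mul_const _),
        integral_mul_const, integral_mul_const,
        integral_log_sin_mul_cos_two_mul_nat_mul hn,
        integral_log_sin_mul_sin_two_mul_nat_mul, zero_mul, sub_zero]

end LogSinFourier

section LogCosKernel

lemma integral_comp_two_mul_of_even_of_periodic {f : ℝ → ℝ} {T : ℝ} (heven : Function.Even f)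
    (hper : Function.Periodic f (2 * T)) (hint : IntervalIntegrable f volume 0 (2 * T)) :
    ∫ x in 0..T, f (2 * x) = ∫ x in 0..T, f x := by
  have hT : T ∈ uIcc 0 (2 * T) := by
    rcases le_total 0 T with h | h
    · exact mem_uIcc_of_le h (by linarith)
    · exact mem_uIcc_of_ge (by linarith) h
  have hreflect : ∫ x in T..2 * T, f x = ∫ x in 0..T, f x := by
    have h := integral_comp_sub_left (a := 0) (b := T) f (2 * T)
    simp only [hper.sub_eq', heven _, sub_zero, show 2 * T - T = T by ring] at h
    exact h.symm
  rw [integral_comp_mul_left f two_ne_zero, mul_zero, ← integral_add_adjacent_intervals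
    (hint.mono_set (uIcc_subset_uIcc left_mem_uIcc hT))
    (hint.mono_set (uIcc_subset_uIcc hT right_mem_uIcc)), hreflect, smul_eq_mul]
  ring

lemma ae_cos_const_mul_ne {k : ℝ} (hk : k ≠ 0) (c : ℝ) : ∀ᵐ x : ℝ, cos (k * x) ≠ c := by
  have hanalytic : AnalyticOnNhd ℝ (fun x ↦ cos (k * x) - c) univ := fun x _ ↦ by fun_prop
  have hnonzero : ∃ x, cos (k * x) - c ≠ 0 := by
    by_contra! h
    have h0 := h 0
    have hπ := h (π / k)
    rw [mul_zero, cos_zero] at h0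
    rw [mul_div_cancel₀ π hk, cos_pi] at hπ
    linarith
  obtain ⟨x, hx⟩ := hnonzero
  have hmem := hanalytic.preimage_zero_mem_codiscrete hx
  have hae := ae_restrict_le_codiscreteWithin (μ := volume) MeasurableSet.univ hmem
  rw [MeasureTheory.Measure.restrict_univ] at hae
  filter_upwards [hae] with y hy
  exact sub_ne_zero.mp hy

lemma log_cos_sub_cos_two_mul {φ x : ℝ} (h : cos (2 * x) ≠ cos φ) :
    log (cos φ - cos (2 * x)) =
      log 2 + log (sin (x + φ / 2)) + log (sin (x - φ / 2)) := by
  have hfactor : cos φ - cos (2 * x) = 2 * sin (x + φ / 2) * sin (x - φ / 2) := by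
    rw [cos_sub_cos, show (φ + 2 * x) / 2 = x + φ / 2 by ring,
      show (φ - 2 * x) / 2 = -(x - φ / 2) by ring, sin_neg]
    ring
  have hne : 2 * sin (x + φ / 2) * sin (x - φ / 2) ≠ 0 := hfactor ▸ sub_ne_zero.mpr h.symm
  have hne' := left_ne_zero_of_mul hne
  rw [hfactor, log_mul hne' (right_ne_zero_of_mul hne),
    log_mul two_ne_zero (right_ne_zero_of_mul hne')]

theorem integral_log_cos_sub_cos_mul_cos_nat_mul {n : ℕ} (hn : n ≠ 0) (φ : ℝ) :
    ∫ θ in 0..π, log (cos φ - cos θ) * cos (n * θ) = -(π / n) * cos (n * φ) := by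
  have hcos : Continuous fun x : ℝ ↦ cos (2 * n * x) := by fun_prop
  have hsub : IntervalIntegrable (fun x ↦ log (sin (x - φ / 2)) * cos (2 * n * x)) volume 0 π :=
    intervalIntegrable_log_mul (fun _ _ ↦ by fun_prop) hcos.continuousOn
  have hadd : IntervalIntegrable (fun x ↦ log (sin (x + φ / 2)) * cos (2 * n * x)) volume 0 π :=
    intervalIntegrable_log_mul (fun _ _ ↦ by fun_prop) hcos.continuousOn
  have hintAdd : ∫ x in 0..π, log (sin (x + φ / 2)) * cos (2 * n * x) =
      -(π / (2 * n)) * cos (2 * n * (φ / 2)) := by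
    simpa only [sub_neg_eq_add, mul_neg, cos_neg] using
      integral_log_sin_sub_mul_cos_two_mul_nat_mul hn (-(φ / 2))
  have hconst : IntervalIntegrable (fun x ↦ log 2 * cos (2 * n * x)) volume 0 π :=
    (hcos.intervalIntegrable 0 π).const_mul _
  have heven : Function.Even fun θ ↦ log (cos φ - cos θ) * cos (n * θ) := fun θ ↦ by
    simp only [cos_neg, mul_neg]
  have hperiodic : Function.Periodic (fun θ ↦ log (cos φ - cos θ) * cos (n * θ)) (2 * π) :=
    fun θ ↦ by simp only [cos_add_two_pi, mul_add, cos_add_nat_mul_two_pi]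
  calc ∫ θ in 0..π, log (cos φ - cos θ) * cos (n * θ)
    _ = ∫ x in 0..π, log (cos φ - cos (2 * x)) * cos (n * (2 * x)) :=
      (integral_comp_two_mul_of_even_of_periodic heven hperiodic
        (intervalIntegrable_log_mul (fun _ _ ↦ by fun_prop) (by fun_prop))).symm
    _ = ∫ x in 0..π, (log 2 * cos (2 * n * x) + log (sin (x + φ / 2)) * cos (2 * n * x) +
          log (sin (x - φ / 2)) * cos (2 * n * x)) := by
      refine integral_congr_ae ?_
      filter_upwards [ae_cos_const_mul_ne two_ne_zero (cos φ)] with x hx _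
      rw [log_cos_sub_cos_two_mul hx, show n * (2 * x) = 2 * n * x by ring]
      ring
    _ = -(π / n) * cos (n * φ) := by
      rw [integral_add (hconst.add hadd) hsub, integral_add hconst hadd, integral_const_mul,
        integral_cos_two_mul_nat_mul hn, hintAdd,
        integral_log_sin_sub_mul_cos_two_mul_nat_mul hn, show 2 * n * (φ / 2) = n * φ by ring]
      field_simp
      ring

lemma cos_nat_mul_pi_sub_of_odd {n : ℕ} (hn : Odd n) (θ : ℝ) :
    cos (n * (π - θ)) = -cos (n * θ) := by
  rw [mul_sub, cos_nat_mul_pi_sub, hn.neg_one_pow, neg_one_mul]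

theorem integral_log_cos_add_cos_div_cos_sub_cos_mul_cos_nat_mul {n : ℕ} (hn : Odd n) (φ : ℝ) :
    ∫ θ in 0..π / 2, log ((cos φ + cos θ) / (cos φ - cos θ)) * cos (n * θ) =
      π / n * cos (n * φ) := by
  have hminus (a b : ℝ) :
      IntervalIntegrable (fun θ ↦ log (cos φ - cos θ) * cos (n * θ)) volume a b :=
    intervalIntegrable_log_mul (fun _ _ ↦ by fun_prop) (by fun_prop)
  have hplus :
      IntervalIntegrable (fun θ ↦ log (cos φ + cos θ) * cos (n * θ)) volume 0 (π / 2) :=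
    intervalIntegrable_log_mul (fun _ _ ↦ by fun_prop) (by fun_prop)
  have hfold : ∫ θ in π / 2..π, log (cos φ - cos θ) * cos (n * θ) =
      -∫ θ in 0..π / 2, log (cos φ + cos θ) * cos (n * θ) := by
    have h := integral_comp_sub_left (a := 0) (b := π / 2)
      (fun θ ↦ log (cos φ - cos θ) * cos (n * θ)) π
    simp only [cos_pi_sub, sub_neg_eq_add, cos_nat_mul_pi_sub_of_odd hn, mul_neg, integral_neg,
      sub_zero, show π - π / 2 = π / 2 by ring] at h
    exact h.symm
  calc ∫ θ in 0..π / 2, log ((cos φ + cos θ) / (cos φ - cos θ)) * cos (n * θ)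
    _ = ∫ θ in 0..π / 2, (log (cos φ + cos θ) * cos (n * θ) -
          log (cos φ - cos θ) * cos (n * θ)) := by
      refine integral_congr_ae ?_
      filter_upwards [ae_cos_const_mul_ne one_ne_zero (cos φ),
        ae_cos_const_mul_ne one_ne_zero (-cos φ)] with θ hsub hadd _
      rw [one_mul] at hsub hadd
      rw [log_div (fun h ↦ hadd (by linarith)) (sub_ne_zero.mpr hsub.symm), sub_mul]
    _ = -∫ θ in 0..π, log (cos φ - cos θ) * cos (n * θ) := by
      rw [integral_sub hplus (hminus _ _),
        ← integral_add_adjacent_intervals (hminus 0 (π / 2)) (hminus (π / 2) π), hfold]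
      ring
    _ = π / n * cos (n * φ) := by
      rw [integral_log_cos_sub_cos_mul_cos_nat_mul hn.pos.ne', neg_mul, neg_neg]

end LogCosKernel

section ChebyshevWeight

variable {lam : ℝ}

lemma sqrt_sq_sub_mul_cos_sq {θ : ℝ} (hlam : 0 ≤ lam) (hθ : 0 ≤ sin θ) :
    √(lam ^ 2 - (lam * cos θ) ^ 2) = lam * sin θ := by
  rw [show lam ^ 2 - (lam * cos θ) ^ 2 = (lam * sin θ) ^ 2 by rw [mul_pow, mul_pow, sin_sq]; ring,
    sqrt_sq (mul_nonneg hlam hθ)]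

lemma sin_pos_of_mem_uIoo_zero_pi_div_two {θ : ℝ} (hθ : θ ∈ uIoo 0 (π / 2)) : 0 < sin θ := by
  rw [uIoo_of_le pi_div_two_pos.le] at hθ
  exact sin_pos_of_mem_Ioo ⟨hθ.1, by linarith [hθ.2, pi_pos]⟩

lemma hasDerivAt_const_mul_cos (c θ : ℝ) :
    HasDerivAt (fun θ ↦ c * cos θ) (-(c * sin θ)) θ := by
  simpa using (hasDerivAt_cos θ).const_mul c

lemma div_sqrt_comp_mul_deriv_eqOn (hlam : 0 < lam) (g : ℝ → ℝ) :
    EqOn (fun θ ↦ ((fun μ ↦ g μ / √(lam ^ 2 - μ ^ 2)) ∘ fun θ ↦ lam * cos θ) θ * -(lam * sin θ))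
      (fun θ ↦ -g (lam * cos θ)) (uIoo 0 (π / 2)) := by
  intro θ hθ
  have hsin := sin_pos_of_mem_uIoo_zero_pi_div_two hθ
  simp only [Function.comp_apply, sqrt_sq_sub_mul_cos_sq hlam.le hsin.le]
  field_simp

lemma integral_div_sqrt_sq_sub_sq (hlam : 0 < lam) (g : ℝ → ℝ) :
    ∫ μ in 0..lam, g μ / √(lam ^ 2 - μ ^ 2) = ∫ θ in 0..π / 2, g (lam * cos θ) := by
  have hsubst := integral_comp_mul_deriv_of_deriv_nonpos (a := 0) (b := π / 2)
    (g := fun μ ↦ g μ / √(lam ^ 2 - μ ^ 2)) (by fun_prop)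
    (fun θ _ ↦ hasDerivAt_const_mul_cos lam θ)
    (fun _ hθ ↦ neg_nonpos.mpr (mul_nonneg hlam.le (sin_pos_of_mem_uIoo_zero_pi_div_two hθ).le))
  rw [integral_congr_uIoo (div_sqrt_comp_mul_deriv_eqOn hlam g), integral_neg, cos_zero, mul_one,
    cos_pi_div_two, mul_zero, integral_symm 0 lam] at hsubst
  exact (neg_injective hsubst).symm

lemma intervalIntegrable_div_sqrt_sq_sub_sq_iff (hlam : 0 < lam) (g : ℝ → ℝ) :
    IntervalIntegrable (fun μ ↦ g μ / √(lam ^ 2 - μ ^ 2)) volume 0 lam ↔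
      IntervalIntegrable (fun θ ↦ g (lam * cos θ)) volume 0 (π / 2) := by
  have hsubst := integrable_comp_mul_deriv_iff_of_deriv_nonpos (a := 0) (b := π / 2)
    (g := fun μ ↦ g μ / √(lam ^ 2 - μ ^ 2)) (by fun_prop)
    (fun θ _ ↦ hasDerivAt_const_mul_cos lam θ)
    (fun _ hθ ↦ neg_nonpos.mpr (mul_nonneg hlam.le (sin_pos_of_mem_uIoo_zero_pi_div_two hθ).le))
  rw [intervalIntegrable_congr_uIoo (div_sqrt_comp_mul_deriv_eqOn hlam g), cos_zero, mul_one,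
    cos_pi_div_two, mul_zero] at hsubst
  rw [IntervalIntegrable.symm_iff, ← hsubst]
  exact ⟨fun h ↦ by simpa only [Pi.neg_def, neg_neg] using h.neg, fun h ↦ h.neg⟩

end ChebyshevWeight

theorem equation_of_state_of_dispersion_relations {G u s : ℝ → ℝ} {a b η : ℝ} (hη : η ≠ 0)
    (hGu : IntervalIntegrable (fun μ ↦ G μ * u μ) volume a b)
    (hGus : IntervalIntegrable (fun μ ↦ G μ * (u μ * s μ)) volume a b)
    (hdensity : ∫ μ in a..b, G μ * u μ = η)
    (hflux : ∫ μ in a..b, G μ * (u μ * s μ) = 4 * η ^ 3) :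
    s η = 4 * η ^ 2 + 1 / η * ∫ μ in a..b, G μ * u μ * (s η - s μ) := by
  have hsplit : ∫ μ in a..b, G μ * u μ * (s η - s μ) = η * s η - 4 * η ^ 3 := calc
    _ = ∫ μ in a..b, (G μ * u μ * s η - G μ * (u μ * s μ)) := by simp only [mul_sub, mul_assoc]
    _ = η * s η - 4 * η ^ 3 := by
      rw [integral_sub (hGu.mul_const _) hGus, integral_mul_const, hdensity, hflux]
  rw [hsplit]
  field_simp
  ring

section Condensate

/-- The logarithmic interaction kernel of the KdV soliton gas: up to the factor `1 / η`, the
phase shift of an `η`-soliton in a collision with a `μ`-soliton. At `μ = η` the junk values of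
division and logarithm make it `0`. -/
noncomputable def interactionKernel (η μ : ℝ) : ℝ :=
  log ((η + μ) / |η - μ|)

/-- The density of states of the genus-0 condensate with spectral support `[0, lam]`. -/
noncomputable def condensateDensity (lam μ : ℝ) : ℝ :=
  μ / (π * √(lam ^ 2 - μ ^ 2))

/-- The tracer velocity in the genus-0 condensate with spectral support `[0, lam]`. -/
def condensateVelocity (lam ζ : ℝ) : ℝ :=
  6 * (2 * ζ ^ 2 - lam ^ 2)

lemma interactionKernel_eq_log_div (η μ : ℝ) :
    interactionKernel η μ = log ((η + μ) / (η - μ)) := by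
  rw [interactionKernel, ← log_abs, abs_div, abs_abs, ← abs_div, log_abs]

lemma intervalIntegrable_interactionKernel_mul_div_sqrt {lam : ℝ} (hlam : 0 < lam) (η : ℝ)
    {p : ℝ → ℝ} (hp : Continuous p) :
    IntervalIntegrable (fun μ ↦ interactionKernel η μ * (p μ / √(lam ^ 2 - μ ^ 2)))
      volume 0 lam := by
  simp only [← mul_div_assoc, interactionKernel_eq_log_div]
  exact (intervalIntegrable_div_sqrt_sq_sub_sq_iff hlam _).mpr <|
    intervalIntegrable_log_mul (fun _ _ ↦ by fun_prop) (by fun_prop)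

theorem integral_interactionKernel_mul_eval_T {lam η : ℝ} (hlam : 0 < lam) (hη : |η| ≤ lam)
    {n : ℕ} (hn : Odd n) :
    ∫ μ in 0..lam, interactionKernel η μ * ((T ℝ n).eval (μ / lam) / √(lam ^ 2 - μ ^ 2)) =
      π / n * (T ℝ n).eval (η / lam) := by
  obtain ⟨φ, rfl⟩ : ∃ φ, η = lam * cos φ := by
    have h := abs_le.mp hη
    refine ⟨arccos (η / lam), ?_⟩
    rw [cos_arccos ((le_div_iff₀ hlam).mpr (by linarith)) ((div_le_one hlam).mpr h.2),
      mul_div_cancel₀ η hlam.ne']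
  simp only [← mul_div_assoc, interactionKernel_eq_log_div]
  rw [integral_div_sqrt_sq_sub_sq hlam]
  simp only [mul_div_cancel_left₀ _ hlam.ne', ← mul_add, ← mul_sub, mul_div_mul_left _ _ hlam.ne',
    T_real_cos, Int.cast_natCast]
  exact integral_log_cos_add_cos_div_cos_sub_cos_mul_cos_nat_mul hn φ

variable {lam η : ℝ}

lemma condensateDensity_eq_eval_T (hlam : 0 < lam) (μ : ℝ) :
    condensateDensity lam μ =
      lam / π * ((T ℝ (1 : ℕ)).eval (μ / lam) / √(lam ^ 2 - μ ^ 2)) := by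
  rw [condensateDensity, Nat.cast_one, T_one, Polynomial.eval_X]
  field_simp

lemma eval_T_three (x : ℝ) : (T ℝ (3 : ℕ)).eval x = 4 * x ^ 3 - 3 * x := by
  rw [show ((3 : ℕ) : ℤ) = 1 + 2 by norm_num, T_add_two, show (1 + 1 : ℤ) = 2 by norm_num,
    T_two, T_one]
  simp only [Polynomial.eval_sub, Polynomial.eval_mul, Polynomial.eval_pow, Polynomial.eval_X,
    Polynomial.eval_ofNat, Polynomial.eval_one]
  ring

lemma condensateDensity_mul_condensateVelocity_eq_eval_T (hlam : 0 < lam) (μ : ℝ) :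
    condensateDensity lam μ * condensateVelocity lam μ =
      3 * lam ^ 3 / π * ((T ℝ (1 : ℕ)).eval (μ / lam) / √(lam ^ 2 - μ ^ 2)) +
        3 * lam ^ 3 / π * ((T ℝ (3 : ℕ)).eval (μ / lam) / √(lam ^ 2 - μ ^ 2)) := by
  rw [condensateDensity, condensateVelocity, eval_T_three, Nat.cast_one, T_one, Polynomial.eval_X]
  field_simp
  ring

lemma intervalIntegrable_interactionKernel_mul_condensateDensity_mul (hlam : 0 < lam) (η : ℝ)
    {f : ℝ → ℝ} (hf : Continuous f) :
    IntervalIntegrable (fun μ ↦ interactionKernel η μ * (condensateDensity lam μ * f μ))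
      volume 0 lam := by
  refine (intervalIntegrable_interactionKernel_mul_div_sqrt hlam η
    (p := fun μ ↦ μ / π * f μ) (by fun_prop)).congr fun μ _ ↦ ?_
  simp only [condensateDensity]
  ring

theorem integral_interactionKernel_mul_condensateDensity (hlam : 0 < lam) (hη : |η| ≤ lam) :
    ∫ μ in 0..lam, interactionKernel η μ * condensateDensity lam μ = η := by
  simp only [condensateDensity_eq_eval_T hlam, mul_left_comm _ (lam / π)]
  rw [integral_const_mul, integral_interactionKernel_mul_eval_T hlam hη odd_one]
  simp only [Nat.cast_one, T_one, Polynomial.eval_X]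
  field_simp

theorem integral_interactionKernel_mul_condensateDensity_mul_condensateVelocity (hlam : 0 < lam)
    (hη : |η| ≤ lam) :
    ∫ μ in 0..lam, interactionKernel η μ * (condensateDensity lam μ * condensateVelocity lam μ) =
      4 * η ^ 3 := by
  have hint (n : ℕ) : IntervalIntegrable (fun μ ↦ interactionKernel η μ *
      ((T ℝ n).eval (μ / lam) / √(lam ^ 2 - μ ^ 2))) volume 0 lam :=
    intervalIntegrable_interactionKernel_mul_div_sqrt hlam η (by fun_prop)
  simp only [condensateDensity_mul_condensateVelocity_eq_eval_T hlam, mul_add,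
    mul_left_comm _ (3 * lam ^ 3 / π)]
  rw [integral_add ((hint 1).const_mul _) ((hint 3).const_mul _), integral_const_mul,
    integral_const_mul, integral_interactionKernel_mul_eval_T hlam hη odd_one,
    integral_interactionKernel_mul_eval_T hlam hη (by decide), eval_T_three]
  simp only [Nat.cast_one, Nat.cast_ofNat, T_one, Polynomial.eval_X]
  field_simp
  ring

end Condensate

/-- Equation of state of the KdV soliton gas for the genus-0 condensate:
with `s(ζ) = 6(2ζ²-λ²)` and `u(μ) = μ/(π√(λ²-μ²))`,
`s(η) = 4η² + (1/η)·∫₀^λ ln((η+μ)/|η-μ|)·u(μ)·(s(η)-s(μ)) dμ` for `0 < η < λ`. -/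
theorem genus0_condensate_equation_of_state (lam η : ℝ) (hlam : 0 < lam)
    (hη0 : 0 < η) (hηlam : η < lam) :
    6 * (2 * η ^ 2 - lam ^ 2) =
      4 * η ^ 2 + (1 / η) *
        ∫ μ in (0:ℝ)..lam,
          Real.log ((η + μ) / |η - μ|) * (μ / (Real.pi * Real.sqrt (lam ^ 2 - μ ^ 2))) *
            (6 * (2 * η ^ 2 - lam ^ 2) - 6 * (2 * μ ^ 2 - lam ^ 2)) := by
  have hη : |η| ≤ lam := (abs_of_pos hη0).trans_le hηlam.le
  have hvelocity : Continuous (condensateVelocity lam) := by unfold condensateVelocity; fun_prop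
  have hGu : IntervalIntegrable (fun μ ↦ interactionKernel η μ * condensateDensity lam μ)
      volume 0 lam := by
    simpa using intervalIntegrable_interactionKernel_mul_condensateDensity_mul hlam η
      (continuous_const (y := (1 : ℝ)))
  exact equation_of_state_of_dispersion_relations hη0.ne' hGu
    (intervalIntegrable_interactionKernel_mul_condensateDensity_mul hlam η hvelocity)
    (integral_interactionKernel_mul_condensateDensity hlam hη)
    (integral_interactionKernel_mul_condensateDensity_mul_condensateVelocity hlam hη)
end
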